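/- For every positive integer k, −(k/π) ∫_0^{2π} cos(k x) · log(2 sin(x/2)) dx = 1. -/

import Mathlib

open scoped Real

/-!
Integrating by parts against `log (2 sin (x / 2))`, whose derivative is `cot (x / 2) / 2`, reduces
the claim to `∫₀^{2π} sin (k x) cot (x / 2) dx = 2π`. Both this integral and the vanishing of the
boundary terms come from the factorisation `sin (k x) = 2 sin (x / 2) ∑_{i < k} cos ((i + 1/2) x)`:
multiplied by the logarithm it gives `t log t` with `t = 2 sin (x / 2)`, continuous up to the
endpoints, and multiplied by the cotangent it gives a cosine polynomial with constant term `1`.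
-/

section

open Real Set Finset intervalIntegral
open MeasureTheory (volume)

theorem sin_nat_mul_eq_two_mul_sin_half_mul_sum_cos (n : ℕ) (x : ℝ) :
    sin (n * x) = 2 * sin (x / 2) * ∑ i ∈ range n, cos (x * i + x / 2) := by
  have half_angle : (n - 1) * x / 2 + x / 2 = n * x / 2 := by ring
  rw [mul_assoc, sin_mul_sum_cos, half_angle, ← mul_assoc, ← sin_two_mul, mul_div_cancel₀]
  exact two_ne_zero

theorem sin_nat_mul_mul_cot_half (n : ℕ) {x : ℝ} (hx : sin (x / 2) ≠ 0) :
    sin (n * x) * cot (x / 2) = ∑ i ∈ range n, (cos (i * x) + cos ((i + 1 : ℕ) * x)) :=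
  calc sin (n * x) * cot (x / 2)
    _ = ∑ i ∈ range n, 2 * cos (x * i + x / 2) * cos (x / 2) := by
      rw [sin_nat_mul_eq_two_mul_sin_half_mul_sum_cos, cot_eq_cos_div_sin, ← sum_mul, ← mul_sum]
      field_simp
    _ = ∑ i ∈ range n, (cos (i * x) + cos ((i + 1 : ℕ) * x)) := by
      refine sum_congr rfl fun i _ ↦ ?_
      rw [two_mul_cos_mul_cos]
      push_cast
      ring_nf

theorem continuous_sin_nat_mul_mul_log_two_mul_sin_half (n : ℕ) :
    Continuous fun x : ℝ ↦ sin (n * x) * log (2 * sin (x / 2)) := by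
  have factored (x : ℝ) : sin (n * x) * log (2 * sin (x / 2)) =
      (∑ i ∈ range n, cos (x * i + x / 2)) * (2 * sin (x / 2) * log (2 * sin (x / 2))) := by
    rw [sin_nat_mul_eq_two_mul_sin_half_mul_sum_cos]
    ring
  simp only [factored]
  fun_prop

theorem hasDerivAt_sin_mul_mul_log_two_mul_sin_half (a : ℝ) {x : ℝ} (hx : sin (x / 2) ≠ 0) :
    HasDerivAt (fun y ↦ sin (a * y) * log (2 * sin (y / 2)))
      (a * (cos (a * x) * log (2 * sin (x / 2))) + 2⁻¹ * (sin (a * x) * cot (x / 2))) x := by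
  have hsin : HasDerivAt (fun y ↦ sin (a * y)) (cos (a * x) * (a * 1)) x :=
    ((hasDerivAt_id x).const_mul a).sin
  have hlog : HasDerivAt (fun y ↦ log (2 * sin (y / 2)))
      (2 * (cos (x / 2) * (1 / 2)) / (2 * sin (x / 2))) x :=
    ((((hasDerivAt_id x).div_const 2).sin).const_mul 2).log (mul_ne_zero two_ne_zero hx)
  refine (hsin.mul hlog).congr_deriv ?_
  rw [cot_eq_cos_div_sin]
  field_simp

theorem intervalIntegrable_log_two_mul_sin_half (a b : ℝ) :
    IntervalIntegrable (fun x ↦ log (2 * sin (x / 2))) volume a b :=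
  MeromorphicOn.intervalIntegrable_log (f := fun x ↦ 2 * sin (x / 2)) fun _ _ ↦
    AnalyticAt.meromorphicAt (by fun_prop)

theorem sin_half_pos_of_mem_Ioo {x : ℝ} (hx : x ∈ Ioo 0 (2 * π)) : 0 < sin (x / 2) :=
  sin_pos_of_pos_of_lt_pi (by linarith [hx.1]) (by linarith [hx.2])

theorem eqOn_sin_nat_mul_mul_cot_half (n : ℕ) :
    EqOn (fun x ↦ sin (n * x) * cot (x / 2))
      (fun x ↦ ∑ i ∈ range n, (cos (i * x) + cos ((i + 1 : ℕ) * x))) (uIoo 0 (2 * π)) := by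
  rw [uIoo_of_le two_pi_pos.le]
  exact fun x hx ↦ sin_nat_mul_mul_cot_half n (sin_half_pos_of_mem_Ioo hx).ne'

theorem intervalIntegrable_sin_nat_mul_mul_cot_half (n : ℕ) :
    IntervalIntegrable (fun x ↦ sin (n * x) * cot (x / 2)) volume 0 (2 * π) :=
  (intervalIntegrable_congr_uIoo (eqOn_sin_nat_mul_mul_cot_half n)).2
    (Continuous.intervalIntegrable (by fun_prop) _ _)

theorem integral_cos_nat_mul (n : ℕ) :
    ∫ x in (0 : ℝ)..(2 * π), cos (n * x) = if n = 0 then 2 * π else 0 := by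
  split_ifs with hn
  · simp [hn]
  · have sin_period : sin (n * (2 * π)) = 0 := by
      simpa using sin_nat_mul_two_pi_sub 0 n
    rw [integral_comp_mul_left cos (Nat.cast_ne_zero.2 hn), integral_cos, sin_period]
    simp

theorem integral_sin_nat_mul_mul_cot_half {n : ℕ} (hn : n ≠ 0) :
    ∫ x in (0 : ℝ)..(2 * π), sin (n * x) * cot (x / 2) = 2 * π := by
  have cos_integrable (m : ℕ) : IntervalIntegrable (fun x : ℝ ↦ cos (m * x)) volume 0 (2 * π) :=
    Continuous.intervalIntegrable (by fun_prop) _ _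
  calc ∫ x in (0 : ℝ)..(2 * π), sin (n * x) * cot (x / 2)
    _ = ∫ x in (0 : ℝ)..(2 * π), ∑ i ∈ range n, (cos (i * x) + cos ((i + 1 : ℕ) * x)) :=
      integral_congr_uIoo (eqOn_sin_nat_mul_mul_cot_half n)
    _ = ∑ i ∈ range n, ((if i = 0 then 2 * π else 0) + if i + 1 = 0 then 2 * π else 0) := by
      rw [integral_finsetSum fun i _ ↦ (cos_integrable i).add (cos_integrable (i + 1))]
      refine sum_congr rfl fun i _ ↦ ?_
      rw [integral_add (cos_integrable i) (cos_integrable (i + 1)), integral_cos_nat_mul,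
        integral_cos_nat_mul]
    _ = 2 * π := by simp [Nat.pos_of_ne_zero hn]

theorem nat_mul_integral_cos_mul_log_two_mul_sin_half (n : ℕ) :
    n * ∫ x in (0 : ℝ)..(2 * π), cos (n * x) * log (2 * sin (x / 2)) =
      -(2⁻¹ * ∫ x in (0 : ℝ)..(2 * π), sin (n * x) * cot (x / 2)) := by
  have cos_log_integrable : IntervalIntegrable
      (fun x ↦ n * (cos (n * x) * log (2 * sin (x / 2)))) volume 0 (2 * π) :=
    ((intervalIntegrable_log_two_mul_sin_half 0 (2 * π)).continuousOn_mul (by fun_prop)).const_mul _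
  have sin_cot_integrable := (intervalIntegrable_sin_nat_mul_mul_cot_half n).const_mul 2⁻¹
  have by_parts := integral_eq_sub_of_hasDerivAt_of_le two_pi_pos.le
    (continuous_sin_nat_mul_mul_log_two_mul_sin_half n).continuousOn
    (fun x hx ↦ hasDerivAt_sin_mul_mul_log_two_mul_sin_half n (sin_half_pos_of_mem_Ioo hx).ne')
    (cos_log_integrable.add sin_cot_integrable)
  have boundary : sin (n * (2 * π)) * log (2 * sin (2 * π / 2)) -
      sin (n * 0) * log (2 * sin (0 / 2)) = 0 := by simp
  rw [integral_add cos_log_integrable sin_cot_integrable, integral_const_mul, integral_const_mul,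
    boundary] at by_parts
  exact eq_neg_of_add_eq_zero_left by_parts

end

/-- For every positive integer k, -(k/π) ∫₀^{2π} cos(kx) log(2 sin(x/2)) dx = 1. -/
theorem cos_log_sin_integral (k : ℕ) (hk : 0 < k) :
    -((k : ℝ) / π) *
        ∫ x in (0:ℝ)..(2 * π), Real.cos (k * x) * Real.log (2 * Real.sin (x / 2)) = 1 := by
  rw [neg_mul, div_mul_eq_mul_div, nat_mul_integral_cos_mul_log_two_mul_sin_half,
    integral_sin_nat_mul_mul_cot_half hk.ne', inv_mul_cancel_left₀ two_ne_zero, neg_div, neg_neg,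
    div_self Real.pi_ne_zero]
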